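/- arXiv:2112.06688 — 3 statements merged into one kernel-verified Lean document; each statement's English description precedes it below -/
import Mathlib

section
/- There exist f, g ∈ ℚ× such that (33, f) ∈ S, (35, g) ∈ S, (35, f) = (33, g) in Br(ℚ), and (35, f) ∉ S. -/
/-!
The witnesses are `f = -51` and `g = 14`. Since `-51 = 9² - 33·2²` and `14 = 7² - 35·1²` are norms
from `ℚ(√33)` and `ℚ(√35)`, the classes `(33, f)` and `(35, g)` vanish (`split_of_norm`), so they
lie in `S`. The equality `(35, f) = (33, g)` is an explicit isomorphism of quaternion algebras
(`quatEq_35_33`).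

That `(35, f) ∉ S` is seen locally, at `3` or at `11`. At both primes `-35` is a square, so every
factor of the tensor product `(35, -51) ⊗ e₁(33, 33) ⊗ e₂(33, 35) ⊗ e₃(35, 35)` becomes a symbol
`(-1, c)`: one uses `35 ~ -1` and `(33, 33) = (-1, 33)`, and the split algebra is `(-1, 1)`.
Hence the class of the product is `(-1, C)` with `C = -51 · 33 ^ (e₁ + e₂) · 35 ^ e₃`. The
valuation of `C` is odd at `3` when `e₁ = e₂`, and odd at `11` when `e₁ ≠ e₂`; as both primes are
`3` modulo `4`, the norm form `x² + y² - C(z² + w²)` of `(-1, C)` is then anisotropic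
(`anisotropic`), so `(-1, C)` is not split.

To avoid any theory of Brauer groups, the passage from four factors to `(-1, C)` is made on a
`16`-dimensional module (`key`): if the four pairs `(I k, J k)` act on it, the commuting
involutions `I 0 * I k`, `k = 1, 2, 3`, have a common `1`-eigenspace which is nonzero and of
dimension at most `2` (three applications of `half`). It is stable under `I 0` and
`J 0 * J 1 * J 2 * J 3`, which generate `(-1, C)`. So `v`, `i v`, `j v`, `i (j v)` are linearly
dependent for any nonzero vector `v` of it, and the coefficients of a dependence relation form a
nontrivial zero of the norm form.
-/

open Quaternion TensorProduct

/-- The Brauer class of the quaternion algebra `(a,b)` over `ℚ` when `e = true`, and the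
trivial Brauer class (represented by the split algebra `M₂(ℚ)`) when `e = false`.
Tensoring with this algebra realizes adding `e•(a,b)` to a Brauer class. -/
def optQ (e : Bool) (a b : ℚ) : Type :=
  match e with
  | true => ℍ[ℚ, a, b]
  | false => Matrix (Fin 2) (Fin 2) ℚ

instance (e : Bool) (a b : ℚ) : Ring (optQ e a b) :=
  match e with
  | true => inferInstanceAs (Ring ℍ[ℚ, a, b])
  | false => inferInstanceAs (Ring (Matrix (Fin 2) (Fin 2) ℚ))

instance (e : Bool) (a b : ℚ) : Algebra ℚ (optQ e a b) :=
  match e with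
  | true => inferInstanceAs (Algebra ℚ ℍ[ℚ, a, b])
  | false => inferInstanceAs (Algebra ℚ (Matrix (Fin 2) (Fin 2) ℚ))

/-- Membership of the quaternion class `(x,y)` in the `𝔽₂`-span
`S = ⟨(33,33),(33,35),(35,35)⟩ ⊆ Br(ℚ)`: there are `e1,e2,e3 ∈ {0,1}` such that
`(x,y) + e1·(33,33) + e2·(33,35) + e3·(35,35) = 0`; the sum of these Brauer classes is
represented by the tensor product below (a central simple algebra of dimension `4⁴ = 256`),
and it is zero iff that algebra is split, i.e. isomorphic to `M₁₆(ℚ)`. -/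
def memS (x y : ℚ) : Prop :=
  ∃ e1 e2 e3 : Bool,
    Nonempty
      ((ℍ[ℚ, x, y] ⊗[ℚ] (optQ e1 33 33 ⊗[ℚ] (optQ e2 33 35 ⊗[ℚ] optQ e3 35 35))) ≃ₐ[ℚ]
        Matrix (Fin 16) (Fin 16) ℚ)

/-- Equality of quaternion Brauer classes `(a,b) = (c,d)` in `Br(ℚ)`: since both are
represented by 4-dimensional central simple algebras, the classes are equal iff the
quaternion algebras are isomorphic as `ℚ`-algebras. -/
def quatEq (a b c d : ℚ) : Prop :=
  Nonempty (ℍ[ℚ, a, b] ≃ₐ[ℚ] ℍ[ℚ, c, d])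

/-! ### Four commuting quaternion pairs acting on a space of dimension 16 -/

/-- An involution `u` anticommuting with an injective `j` has a nonzero `1`-eigenspace of at most
half the dimension on every nonzero subspace `W` stable under both, because `j` maps each of the
two eigenspaces of `u` injectively into the other. -/
theorem half {K V : Type*} [Field K] [AddCommGroup V] [Module K V] [FiniteDimensional K V]
    (h2 : (2 : K) ≠ 0) {u j : Module.End K V} (W : Submodule K V)
    (hu : u * u = 1) (huj : SemiconjBy u j (-j)) (hj : Function.Injective j)
    (hWu : ∀ w ∈ W, u w ∈ W) (hWj : ∀ w ∈ W, j w ∈ W) (hW : W ≠ ⊥) :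
    W ⊓ LinearMap.ker (u - 1) ≠ ⊥ ∧
      2 * Module.finrank K ↥(W ⊓ LinearMap.ker (u - 1)) ≤ Module.finrank K W := by
  have huu (v : V) : u (u v) = v := by
    simpa using congrArg (fun t : Module.End K V => t v) hu
  have hujv (v : V) : u (j v) = -(j (u v)) := by
    simpa using congrArg (fun t : Module.End K V => t v) huj.eq
  constructor
  · obtain ⟨w, hw, hw0⟩ := Submodule.exists_mem_ne_zero_of_ne_bot hW
    rw [Submodule.ne_bot_iff]
    by_cases h : w + u w = 0
    · -- `w` lies in the `-1`-eigenspace, which `j` exchanges with the `1`-eigenspace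
      refine ⟨j w, ⟨hWj w hw, ?_⟩, fun h0 => hw0 (hj (by simpa using h0))⟩
      have : u w = -w := (neg_eq_of_add_eq_zero_right h).symm
      simp [LinearMap.mem_ker, hujv, this]
    · refine ⟨w + u w, ⟨W.add_mem hw (hWu w hw), ?_⟩, h⟩
      simp [LinearMap.mem_ker, huu, add_comm]
  · set P := W ⊓ LinearMap.ker (u - 1) with hP
    have hPu : ∀ w ∈ P, u w = w := fun w hw => by
      have := hw.2
      simpa [LinearMap.mem_ker, sub_eq_zero] using this
    have hdisj : P ⊓ P.map j = ⊥ := by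
      rw [Submodule.eq_bot_iff]
      rintro x ⟨hx, y, hy, rfl⟩
      have h1 := hPu _ hx
      rw [hujv, hPu y hy] at h1
      have h3 : (2 : K) • j y = 0 := by
        rw [two_smul]
        nth_rewrite 1 [← h1]
        simp
      exact (smul_eq_zero.mp h3).resolve_left h2
    have hle : P ⊔ P.map j ≤ W := by
      refine sup_le inf_le_left ?_
      rintro _ ⟨y, hy, rfl⟩
      exact hWj y hy.1
    have hdim := Submodule.finrank_sup_add_finrank_inf_eq P (P.map j)
    rw [hdisj, finrank_bot, ← (Submodule.equivMapOfInjective j hj P).finrank_eq] at hdim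
    have := Submodule.finrank_mono hle
    omega

/-- If four mutually commuting pairs generating the symbols `(-1, c k)` act on a space of dimension
`16`, then the norm form of `(-1, c 0 * c 1 * c 2 * c 3)` is isotropic. -/
theorem key {K V : Type*} [Field K] [AddCommGroup V] [Module K V] [FiniteDimensional K V]
    (h2 : (2 : K) ≠ 0) (hV : Module.finrank K V = 16) (I J : Fin 4 → Module.End K V)
    (c : Fin 4 → K) (hc : ∀ k, c k ≠ 0)
    (hI : ∀ k, I k * I k = -1) (hJ : ∀ k, J k * J k = c k • 1)
    (hIJ : ∀ k, I k * J k = -(J k * I k))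
    (cII : ∀ k l, k ≠ l → Commute (I k) (I l)) (cIJ : ∀ k l, k ≠ l → Commute (I k) (J l))
    (cJJ : ∀ k l, k ≠ l → Commute (J k) (J l)) :
    ∃ x y z w : K, (x ≠ 0 ∨ y ≠ 0 ∨ z ≠ 0 ∨ w ≠ 0) ∧
      x ^ 2 + y ^ 2 = (c 0 * c 1 * c 2 * c 3) * (z ^ 2 + w ^ 2) := by
  have aIJ (k) : SemiconjBy (I k) (J k) (-J k) := by
    simpa [SemiconjBy] using hIJ k
  set u : Fin 4 → Module.End K V := fun k => I 0 * I k with hu_def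
  have hu : ∀ k, k ≠ 0 → u k * u k = 1 := by
    intro k hk
    have := (cII k 0 hk).eq
    calc I 0 * I k * (I 0 * I k) = I 0 * (I k * I 0) * I k := by noncomm_ring
      _ = (I 0 * I 0) * (I k * I k) := by rw [this]; noncomm_ring
      _ = 1 := by simp [hI]
  have huJ : ∀ k, k ≠ 0 → SemiconjBy (u k) (J k) (-J k) := fun k hk =>
    SemiconjBy.mul_left ((cIJ 0 k hk.symm).neg_right) (aIJ k)
  have huJ0 : ∀ k, k ≠ 0 → SemiconjBy (u k) (J 0) (-J 0) := fun k hk =>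
    SemiconjBy.mul_left (aIJ 0) (cIJ k 0 hk)
  have huJl : ∀ k l, l ≠ 0 → k ≠ l → Commute (u k) (J l) := fun k l hl hkl =>
    Commute.mul_left (cIJ 0 l hl.symm) (cIJ k l hkl)
  have cII' : ∀ k l, Commute (I k) (I l) := fun k l => by
    by_cases h : k = l
    · subst h; exact Commute.refl _
    · exact cII k l h
  have huI : ∀ k l, Commute (u k) (I l) := fun k l => (cII' 0 l).mul_left (cII' k l)
  have huu : ∀ k l, Commute (u k) (u l) := fun k l => (huI k 0).mul_right (huI k l)
  have hJinj : ∀ k, Function.Injective (J k) := by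
    intro k x y hxy
    have h := congrArg (J k) hxy
    rw [← Module.End.mul_apply, ← Module.End.mul_apply, hJ] at h
    exact smul_right_injective V (hc k) (by simpa using h)
  -- `I 0` and `j` commute with every `u k` and generate the symbol `(-1, c 0 * c 1 * c 2 * c 3)`
  set j : Module.End K V := J 0 * J 1 * J 2 * J 3 with hj_def
  have huj : ∀ k, k ≠ 0 → Commute (u k) j := by
    intro k hk
    have h0 := huJ0 k hk
    have h1 := huJ k hk
    have hl := fun l => huJl k l
    fin_cases k
    · exact absurd rfl hk
    · simpa [SemiconjBy, Commute] using
        ((h0.mul_right h1).mul_right (hl 2 (by decide) (by decide))).mul_right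
          (hl 3 (by decide) (by decide))
    · simpa [SemiconjBy, Commute] using
        ((h0.mul_right (hl 1 (by decide) (by decide))).mul_right h1).mul_right
          (hl 3 (by decide) (by decide))
    · simpa [SemiconjBy, Commute] using
        ((h0.mul_right (hl 1 (by decide) (by decide))).mul_right
          (hl 2 (by decide) (by decide))).mul_right h1
  have hij : SemiconjBy (I 0) j (-j) := by
    have := (((aIJ 0).mul_right (cIJ 0 1 (by decide))).mul_right
      (cIJ 0 2 (by decide))).mul_right (cIJ 0 3 (by decide))
    simpa [SemiconjBy, Commute, hj_def] using this
  have hjj : j * j = (c 0 * c 1 * c 2 * c 3) • 1 := by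
    have h10 : J 3 * (J 0 * J 1 * J 2) = (J 0 * J 1 * J 2) * J 3 :=
      (((cJJ 3 0 (by decide)).mul_right (cJJ 3 1 (by decide))).mul_right (cJJ 3 2 (by decide))).eq
    have h20 : J 2 * (J 0 * J 1) = (J 0 * J 1) * J 2 :=
      ((cJJ 2 0 (by decide)).mul_right (cJJ 2 1 (by decide))).eq
    have h30 : J 1 * J 0 = J 0 * J 1 := (cJJ 1 0 (by decide)).eq
    calc j * j = (J 0 * J 1 * J 2) * (J 3 * (J 0 * J 1 * J 2)) * J 3 := by
          rw [hj_def]; noncomm_ring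
      _ = (J 0 * J 1) * (J 2 * (J 0 * J 1)) * J 2 * (J 3 * J 3) := by
          rw [h10]; noncomm_ring
      _ = J 0 * (J 1 * J 0) * J 1 * (J 2 * J 2) * (J 3 * J 3) := by
          rw [h20]; noncomm_ring
      _ = (J 0 * J 0) * (J 1 * J 1) * (J 2 * J 2) * (J 3 * J 3) := by
          rw [h30]; noncomm_ring
      _ = _ := by simp [hJ, smul_smul]; congr 1; ring
  -- `W1 ⊇ W2 ⊇ W3` below are the successive common `1`-eigenspaces of `u 1`, `u 2`, `u 3`
  have stab {f g : Module.End K V} (h : Commute f g) :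
      ∀ w ∈ LinearMap.ker (f - 1), g w ∈ LinearMap.ker (f - 1) := by
    intro w hw
    have h' : f w = w := by simpa [sub_eq_zero] using hw
    have : f (g w) = g (f w) := congrArg (fun t : Module.End K V => t w) h.eq
    simp [this, h']
  have hbot : (⊤ : Submodule K V) ≠ ⊥ := by
    intro h
    have := finrank_top K V
    rw [h, finrank_bot] at this
    omega
  obtain ⟨n1, d1⟩ := half h2 ⊤ (hu 1 (by decide)) (huJ 1 (by decide)) (hJinj 1)
    (fun _ _ => trivial) (fun _ _ => trivial) hbot
  set W1 := (⊤ : Submodule K V) ⊓ LinearMap.ker (u 1 - 1)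
  have s1 {g : Module.End K V} (h : Commute (u 1) g) : ∀ w ∈ W1, g w ∈ W1 :=
    fun w hw => ⟨trivial, stab h w hw.2⟩
  obtain ⟨n2, d2⟩ := half h2 W1 (hu 2 (by decide)) (huJ 2 (by decide)) (hJinj 2)
    (s1 (huu 1 2)) (s1 (huJl 1 2 (by decide) (by decide))) n1
  set W2 := W1 ⊓ LinearMap.ker (u 2 - 1)
  have s2 {g : Module.End K V} (h : Commute (u 1) g) (h' : Commute (u 2) g) :
      ∀ w ∈ W2, g w ∈ W2 :=
    fun w hw => ⟨s1 h w hw.1, stab h' w hw.2⟩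
  obtain ⟨n3, d3⟩ := half h2 W2 (hu 3 (by decide)) (huJ 3 (by decide)) (hJinj 3)
    (s2 (huu 1 3) (huu 2 3))
    (s2 (huJl 1 3 (by decide) (by decide)) (huJl 2 3 (by decide) (by decide))) n2
  set W3 := W2 ⊓ LinearMap.ker (u 3 - 1)
  have s3 {g : Module.End K V} (h : ∀ k, k ≠ 0 → Commute (u k) g) : ∀ w ∈ W3, g w ∈ W3 :=
    fun w hw => ⟨s2 (h 1 (by decide)) (h 2 (by decide)) w hw.1, stab (h 3 (by decide)) w hw.2⟩
  rw [finrank_top, hV] at d1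
  have hdim : Module.finrank K W3 < 4 := by omega
  obtain ⟨v, hv, hv0⟩ := Submodule.exists_mem_ne_zero_of_ne_bot n3
  have mi := s3 (fun k _ => huI k 0)
  have mj := s3 huj
  have hdep : ¬ LinearIndependent K
      (![⟨v, hv⟩, ⟨I 0 v, mi v hv⟩, ⟨j v, mj v hv⟩, ⟨I 0 (j v), mi _ (mj v hv)⟩] : Fin 4 → W3) := by
    intro h
    have := h.fintype_card_le_finrank
    simp at this
    omega
  rw [Fintype.not_linearIndependent_iff] at hdep
  obtain ⟨a, ha, k, hk⟩ := hdep
  refine ⟨a 0, a 1, a 2, a 3, ?_, ?_⟩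
  · fin_cases k
    · exact Or.inl hk
    · exact Or.inr (Or.inl hk)
    · exact Or.inr (Or.inr (Or.inl hk))
    · exact Or.inr (Or.inr (Or.inr hk))
  · have hrel : a 0 • v + a 1 • I 0 v + a 2 • j v + a 3 • I 0 (j v) = 0 := by
      simpa [Fin.sum_univ_four] using congrArg Subtype.val ha
    set i := I 0 with hi_def
    have ii (x : V) : i (i x) = -x := by
      simpa using congrArg (fun t : Module.End K V => t x) (hI 0)
    have ji (x : V) : j (i x) = -(i (j x)) := by
      have := congrArg (fun t : Module.End K V => t x) hij.eq
      simp only [Module.End.mul_apply, neg_mul, LinearMap.neg_apply] at this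
      rw [this, neg_neg]
    set C := c 0 * c 1 * c 2 * c 3
    have jj (x : V) : j (j x) = C • x := by
      simpa using congrArg (fun t : Module.End K V => t x) hjj
    -- applying the conjugate quaternion to `hrel` multiplies `v` by the norm
    have h1 := congrArg i hrel
    have h2' := congrArg j hrel
    have h3 := congrArg i h2'
    simp only [map_add, map_smul, ii, ji, jj, map_zero, map_neg, neg_neg, smul_neg] at h1 h2' h3
    have : (a 0 ^ 2 + a 1 ^ 2 - C * (a 2 ^ 2 + a 3 ^ 2)) • v = 0 := by
      linear_combination (norm := module) a 0 • hrel - a 1 • h1 - a 2 • h2' - a 3 • h3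
    exact sub_eq_zero.mp ((smul_eq_zero.mp this).resolve_right hv0)

/-! ### Local computations at primes congruent to 3 modulo 4 -/

/-- A nontrivial sum of two squares in `ℚ_[p]` has even valuation when `p ≡ 3` modulo `4`, since
`-1` is not a square modulo `p`. -/
theorem sq_add_sq_norm {p : ℕ} [Fact p.Prime] (hp : p % 4 = 3) (x y : ℚ_[p])
    (h : x ≠ 0 ∨ y ≠ 0) : ∃ n : ℤ, ‖x ^ 2 + y ^ 2‖ = (p : ℝ) ^ (2 * n) := by
  have unit (t : ℤ_[p]) : ‖1 + t ^ 2‖ = 1 := by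
    by_contra hne
    have hlt : ‖1 + t ^ 2‖ < 1 := lt_of_le_of_ne (PadicInt.norm_le_one _) hne
    have hm : 1 + t ^ 2 ∈ RingHom.ker (PadicInt.toZMod (p := p)) := by
      rw [PadicInt.ker_toZMod]
      exact PadicInt.mem_nonunits.mpr hlt
    have h0 : 1 + (PadicInt.toZMod t) ^ 2 = 0 := by
      simpa [RingHom.mem_ker] using hm
    refine ZMod.exists_sq_eq_neg_one_iff.mp ⟨PadicInt.toZMod t, ?_⟩ hp
    linear_combination -h0
  have main (x y : ℚ_[p]) (hy : y ≠ 0) (hxy : ‖x‖ ≤ ‖y‖) :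
      ∃ n : ℤ, ‖x ^ 2 + y ^ 2‖ = (p : ℝ) ^ (2 * n) := by
    have ht : ‖x / y‖ ≤ 1 := by
      rw [norm_div]
      exact div_le_one_of_le₀ hxy (norm_nonneg _)
    have hu : ‖1 + (x / y) ^ 2‖ = 1 := by
      have h := unit ⟨x / y, ht⟩
      rw [PadicInt.norm_def] at h
      push_cast at h
      exact h
    have he : x ^ 2 + y ^ 2 = y ^ 2 * (1 + (x / y) ^ 2) := by
      field_simp
      ring
    refine ⟨-y.valuation, ?_⟩
    rw [he, norm_mul, hu, mul_one, norm_pow, Padic.norm_eq_zpow_neg_valuation hy,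
      mul_comm 2, zpow_mul]
    norm_cast
  rcases le_total ‖x‖ ‖y‖ with hxy | hxy
  · refine main x y (fun hy => ?_) hxy
    have : x = 0 := by simpa [hy] using hxy
    tauto
  · rw [add_comm]
    refine main y x (fun hx => ?_) hxy
    have : y = 0 := by simpa [hx] using hxy
    tauto

/-- For `p ≡ 3` modulo `4` and `c` of odd valuation, the norm form of `(-1, c)` is anisotropic: the
two sides of the equation `h` would have valuations of different parity. -/
theorem anisotropic {p : ℕ} [Fact p.Prime] (hp : p % 4 = 3) {c : ℚ_[p]} {m : ℤ}
    (hc : ‖c‖ = (p : ℝ) ^ (2 * m + 1)) (x y z w : ℚ_[p])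
    (h : x ^ 2 + y ^ 2 = c * (z ^ 2 + w ^ 2)) : ¬ (x ≠ 0 ∨ y ≠ 0 ∨ z ≠ 0 ∨ w ≠ 0) := by
  have hp0 : (0 : ℝ) < p := by exact_mod_cast (Fact.out : p.Prime).pos
  have hp1 : (p : ℝ) ≠ 1 := by exact_mod_cast (Fact.out : p.Prime).one_lt.ne'
  have hc0 : c ≠ 0 := by
    rintro rfl
    rw [norm_zero] at hc
    exact (zpow_pos hp0 _).ne hc
  have nz (x y : ℚ_[p]) (h : x ≠ 0 ∨ y ≠ 0) : x ^ 2 + y ^ 2 ≠ 0 := by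
    intro h0
    obtain ⟨n, hn⟩ := sq_add_sq_norm hp x y h
    rw [h0, norm_zero] at hn
    exact (zpow_pos hp0 _).ne hn
  intro hne
  by_cases hxy : x ≠ 0 ∨ y ≠ 0
  · have hzw : z ≠ 0 ∨ w ≠ 0 := by
      by_contra hzw
      push Not at hzw
      exact nz x y hxy (by rw [h, hzw.1, hzw.2]; ring)
    obtain ⟨a, ha⟩ := sq_add_sq_norm hp x y hxy
    obtain ⟨b, hb⟩ := sq_add_sq_norm hp z w hzw
    rw [h, norm_mul, hc, hb, ← zpow_add₀ hp0.ne'] at ha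
    have := zpow_right_injective₀ hp0 hp1 ha
    omega
  · have hzw : z ≠ 0 ∨ w ≠ 0 := by tauto
    push Not at hxy
    rw [hxy.1, hxy.2] at h
    exact mul_ne_zero hc0 (nz z w hzw) (by rw [← h]; ring)

/-- By Hensel's lemma, a simple root `a` of `X² + 35` modulo `p` gives a square root of `-35`
in `ℚ_[p]`. -/
theorem exists_sq_eq_neg_35 {p : ℕ} [Fact p.Prime] (a : ℤ) (ha : (p : ℤ) ∣ a ^ 2 + 35)
    (ha' : ¬ (p : ℤ) ∣ 2 * a) : ∃ s : ℚ_[p], s ^ 2 = -35 := by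
  have h1 : ‖((a ^ 2 + 35 : ℤ) : ℤ_[p])‖ < 1 := (PadicInt.norm_int_lt_one_iff_dvd _).mpr ha
  have h2 : ‖((2 * a : ℤ) : ℤ_[p])‖ = 1 :=
    le_antisymm (PadicInt.norm_le_one _)
      (not_lt.mp fun h => ha' ((PadicInt.norm_int_lt_one_iff_dvd _).mp h))
  obtain ⟨z, hz, -⟩ := hensels_lemma (p := p) (R := ℤ)
    (F := Polynomial.X ^ 2 + 35) (a := (a : ℤ_[p])) (by
      have e : (Polynomial.aeval (a : ℤ_[p])) (Polynomial.derivative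
          (Polynomial.X ^ 2 + 35 : Polynomial ℤ)) = ((2 * a : ℤ) : ℤ_[p]) := by
        simp [map_ofNat]
      have e' : (Polynomial.aeval (a : ℤ_[p]))
          (Polynomial.X ^ 2 + 35 : Polynomial ℤ) = ((a ^ 2 + 35 : ℤ) : ℤ_[p]) := by
        simp [map_ofNat]
      rw [e, e', h2]
      simpa using h1)
  refine ⟨z, ?_⟩
  have hz' : z ^ 2 + 35 = 0 := by simpa [map_ofNat] using hz
  have := congrArg PadicInt.Coe.ringHom hz'
  rw [map_add, map_pow, map_ofNat, map_zero] at this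
  change (z : ℚ_[p]) ^ 2 + 35 = 0 at this
  linear_combination this

/-! ### Generating pairs of the tensor factors -/

/-- `(i, j)` is a pair of anticommuting elements with squares `a` and `b`, that is,
the image of the standard generators of the quaternion algebra `(a, b)`. -/
structure QPair {A : Type*} [Ring A] [Algebra ℚ A] (a b : ℚ) (i j : A) : Prop where
  ii : i * i = algebraMap ℚ A a
  jj : j * j = algebraMap ℚ A b
  ij : i * j = -(j * i)

theorem quat_pair (a b : ℚ) :
    QPair a b (⟨0, 1, 0, 0⟩ : ℍ[ℚ, a, b]) (⟨0, 0, 1, 0⟩ : ℍ[ℚ, a, b]) := by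
  constructor <;> ext <;> simp [QuaternionAlgebra.algebraMap_eq]

theorem mat_pair :
    QPair (-1) 1 (!![0, -1; 1, 0] : Matrix (Fin 2) (Fin 2) ℚ) !![1, 0; 0, -1] := by
  constructor <;> ext i j <;> fin_cases i <;> fin_cases j <;>
    simp [Matrix.algebraMap_matrix_apply]

theorem QPair.swap {A : Type*} [Ring A] [Algebra ℚ A] {a b : ℚ} {i j : A} (h : QPair a b i j) :
    QPair b a j i := ⟨h.jj, h.ii, by rw [h.ij, neg_neg]⟩

theorem optQ_pair (e : Bool) (a b : ℚ) :
    ∃ i j : optQ e a b, QPair (if e then a else -1) (if e then b else 1) i j := by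
  cases e
  · exact ⟨_, _, mat_pair⟩
  · exact ⟨_, _, quat_pair a b⟩

/-- The algebra `(33, 33)` is also `(-1, 33)`, through the pair `(ij / 33, j)`. -/
theorem optQ_pair_33_33 (e : Bool) :
    ∃ i j : optQ e 33 33, QPair (-1) (if e then 33 else 1) i j := by
  cases e
  · exact ⟨_, _, mat_pair⟩
  · refine ⟨(⟨0, 0, 0, 1 / 33⟩ : ℍ[ℚ, 33, 33]), (⟨0, 0, 1, 0⟩ : ℍ[ℚ, 33, 33]), ?_⟩
    show QPair (A := ℍ[ℚ, 33, 33]) _ _ _ _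
    constructor <;> ext <;> simp [QuaternionAlgebra.algebraMap_eq]

theorem optQ_pair_33_35 (e : Bool) :
    ∃ i j : optQ e 33 35, QPair (if e then 35 else -1) (if e then 33 else 1) i j := by
  cases e
  · exact ⟨_, _, mat_pair⟩
  · exact ⟨_, _, (quat_pair 33 35).swap⟩

theorem QPair.map {A B : Type*} [Ring A] [Algebra ℚ A] [Ring B] [Algebra ℚ B] (f : A →ₐ[ℚ] B)
    {a b : ℚ} {i j : A} (h : QPair a b i j) : QPair a b (f i) (f j) :=
  ⟨by rw [← map_mul, h.ii, AlgHom.commutes], by rw [← map_mul, h.jj, AlgHom.commutes],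
    by rw [← map_mul, h.ij, map_neg, map_mul]⟩

/-- Four mutually commuting pairs over `ℚ` of types `(35, b k)` or `(-1, b k)` cannot live in
`M₁₆(ℚ)` if, for some `p ≡ 3` modulo `4` with `-35` a square in `ℚ_[p]`, the product of the `b k`
has odd valuation: rescaling over `ℚ_[p]` turns every pair into one of type `(-1, b k)`. -/
theorem local_obstruction {p : ℕ} [Fact p.Prime] (hp : p % 4 = 3)
    (hs : ∃ s : ℚ_[p], s ^ 2 = -35)
    (a b : Fin 4 → ℚ) (ha : ∀ k, a k = 35 ∨ a k = -1) (hb : ∀ k, b k ≠ 0)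
    (I J : Fin 4 → Matrix (Fin 16) (Fin 16) ℚ) (hIJ : ∀ k, QPair (a k) (b k) (I k) (J k))
    (cII : ∀ k l, k ≠ l → Commute (I k) (I l)) (cIJ : ∀ k l, k ≠ l → Commute (I k) (J l))
    (cJJ : ∀ k l, k ≠ l → Commute (J k) (J l)) {m : ℤ}
    (hm : ‖((b 0 * b 1 * b 2 * b 3 : ℚ) : ℚ_[p])‖ = (p : ℝ) ^ (2 * m + 1)) : False := by
  obtain ⟨s, hs⟩ := hs
  have hsk (k) : ∃ s : ℚ_[p], s ^ 2 = -(a k : ℚ_[p]) := by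
    rcases ha k with h | h
    · exact ⟨s, by rw [hs, h]; norm_num⟩
    · exact ⟨1, by rw [h]; norm_num⟩
  choose t ht using hsk
  have ht0 (k) : t k ≠ 0 := by
    intro h0
    have h := ht k
    rw [h0] at h
    rcases ha k with h' | h' <;> rw [h'] at h <;> norm_num at h
  -- extension of scalars, read as an action on `ℚ_[p] ^ 16`
  let ψ : Matrix (Fin 16) (Fin 16) ℚ →+* Module.End ℚ_[p] (Fin 16 → ℚ_[p]) :=
    (Matrix.toLinAlgEquiv' : Matrix (Fin 16) (Fin 16) ℚ_[p] ≃ₐ[ℚ_[p]] _).toAlgHom.toRingHom.comp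
      (algebraMap ℚ ℚ_[p]).mapMatrix
  have hψ (q : ℚ) : ψ (algebraMap ℚ _ q) = (q : ℚ_[p]) • 1 := by
    have h : (algebraMap ℚ ℚ_[p]).mapMatrix (algebraMap ℚ (Matrix (Fin 16) (Fin 16) ℚ) q) =
        algebraMap ℚ_[p] (Matrix (Fin 16) (Fin 16) ℚ_[p]) q := by
      ext x y
      by_cases hxy : x = y <;> simp [Matrix.algebraMap_matrix_apply, hxy]
    change (Matrix.toLinAlgEquiv' : Matrix (Fin 16) (Fin 16) ℚ_[p] ≃ₐ[ℚ_[p]] _)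
      ((algebraMap ℚ ℚ_[p]).mapMatrix (algebraMap ℚ (Matrix (Fin 16) (Fin 16) ℚ) q)) = _
    rw [h, AlgEquiv.commutes, Algebra.algebraMap_eq_smul_one]
  obtain ⟨x, y, z, w, hne, hxy⟩ := key (K := ℚ_[p]) (V := Fin 16 → ℚ_[p]) two_ne_zero (by simp)
    (fun k => (t k)⁻¹ • ψ (I k)) (fun k => ψ (J k)) (fun k => (b k : ℚ_[p]))
    (fun k => by exact_mod_cast hb k)
    (fun k => by
      have : (t k)⁻¹ * (t k)⁻¹ * (a k : ℚ_[p]) = -1 := by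
        have := ht0 k
        field_simp
        linear_combination ht k
      rw [smul_mul_smul_comm, ← map_mul, (hIJ k).ii, hψ, smul_smul, this]
      simp)
    (fun k => by rw [← map_mul, (hIJ k).jj, hψ])
    (fun k => by
      rw [smul_mul_assoc, mul_smul_comm, ← map_mul, ← map_mul, (hIJ k).ij, map_neg, smul_neg])
    (fun k l h => (((cII k l h).map ψ).smul_left _).smul_right _)
    (fun k l h => ((cIJ k l h).map ψ).smul_left _)
    (fun k l h => (cJJ k l h).map ψ)
  refine anisotropic hp (c := (b 0 : ℚ_[p]) * b 1 * b 2 * b 3) (m := m) ?_ x y z w hxy hne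
  rw [← hm]
  push_cast
  rfl

/-- Generating pairs of four algebras give mutually commuting pairs in their tensor product. -/
theorem tensor_pairs {A B C D : Type} [Ring A] [Algebra ℚ A] [Ring B] [Algebra ℚ B]
    [Ring C] [Algebra ℚ C] [Ring D] [Algebra ℚ D] (a b : Fin 4 → ℚ)
    (hA : ∃ i j : A, QPair (a 0) (b 0) i j) (hB : ∃ i j : B, QPair (a 1) (b 1) i j)
    (hC : ∃ i j : C, QPair (a 2) (b 2) i j) (hD : ∃ i j : D, QPair (a 3) (b 3) i j) :
    ∃ I J : Fin 4 → A ⊗[ℚ] (B ⊗[ℚ] (C ⊗[ℚ] D)), (∀ k, QPair (a k) (b k) (I k) (J k)) ∧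
      (∀ k l, k ≠ l → Commute (I k) (I l)) ∧ (∀ k l, k ≠ l → Commute (I k) (J l)) ∧
      (∀ k l, k ≠ l → Commute (J k) (J l)) := by
  obtain ⟨i₀, j₀, h₀⟩ := hA
  obtain ⟨i₁, j₁, h₁⟩ := hB
  obtain ⟨i₂, j₂, h₂⟩ := hC
  obtain ⟨i₃, j₃, h₃⟩ := hD
  let f (x : A) (y : B) (z : C) (w : D) : Fin 4 → A ⊗[ℚ] (B ⊗[ℚ] (C ⊗[ℚ] D)) :=
    ![x ⊗ₜ 1, 1 ⊗ₜ (y ⊗ₜ 1), 1 ⊗ₜ (1 ⊗ₜ (z ⊗ₜ 1)), 1 ⊗ₜ (1 ⊗ₜ (1 ⊗ₜ w))]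
  have hf (x : A) (y : B) (z : C) (w : D) (x' : A) (y' : B) (z' : C) (w' : D) (k l : Fin 4)
      (hkl : k ≠ l) : Commute (f x y z w k) (f x' y' z' w' l) := by
    fin_cases k <;> fin_cases l <;> first
      | exact absurd rfl hkl
      | simp [f, Commute, SemiconjBy]
  refine ⟨f i₀ i₁ i₂ i₃, f j₀ j₁ j₂ j₃, ?_, hf _ _ _ _ _ _ _ _, hf _ _ _ _ _ _ _ _,
    hf _ _ _ _ _ _ _ _⟩
  intro k
  fin_cases k
  · exact h₀.map (Algebra.TensorProduct.includeLeft : A →ₐ[ℚ] A ⊗[ℚ] (B ⊗[ℚ] (C ⊗[ℚ] D)))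
  · exact (h₁.map (Algebra.TensorProduct.includeLeft : B →ₐ[ℚ] B ⊗[ℚ] (C ⊗[ℚ] D))).map
      (Algebra.TensorProduct.includeRight : _ →ₐ[ℚ] A ⊗[ℚ] (B ⊗[ℚ] (C ⊗[ℚ] D)))
  · exact ((h₂.map (Algebra.TensorProduct.includeLeft : C →ₐ[ℚ] C ⊗[ℚ] D)).map
      (Algebra.TensorProduct.includeRight : _ →ₐ[ℚ] B ⊗[ℚ] (C ⊗[ℚ] D))).map
      (Algebra.TensorProduct.includeRight : _ →ₐ[ℚ] A ⊗[ℚ] (B ⊗[ℚ] (C ⊗[ℚ] D)))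
  · exact ((h₃.map (Algebra.TensorProduct.includeRight : D →ₐ[ℚ] C ⊗[ℚ] D)).map
      (Algebra.TensorProduct.includeRight : _ →ₐ[ℚ] B ⊗[ℚ] (C ⊗[ℚ] D))).map
      (Algebra.TensorProduct.includeRight : _ →ₐ[ℚ] A ⊗[ℚ] (B ⊗[ℚ] (C ⊗[ℚ] D)))

/-! ### The class `(35, -51)` is not in the span -/

theorem norm_int_eq_one {p : ℕ} [Fact p.Prime] (n : ℤ) (h : ¬ (p : ℤ) ∣ n) :
    ‖(n : ℚ_[p])‖ = 1 :=
  le_antisymm (Padic.norm_int_le_one n)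
    (not_lt.mp fun h' => h (Padic.norm_intCast_lt_one_iff.mp h'))

theorem not_memS : ¬ memS 35 (-51) := by
  rintro ⟨e1, e2, e3, ⟨φ⟩⟩
  have hn : Fact (Nat.Prime 3) := ⟨by norm_num⟩
  have hn' : Fact (Nat.Prime 11) := ⟨by norm_num⟩
  let a : Fin 4 → ℚ := ![35, -1, if e2 then 35 else -1, if e3 then 35 else -1]
  let b : Fin 4 → ℚ := ![-51, if e1 then 33 else 1, if e2 then 33 else 1, if e3 then 35 else 1]
  obtain ⟨I, J, hIJ, cII, cIJ, cJJ⟩ := tensor_pairs (A := ℍ[ℚ, 35, -51]) (B := optQ e1 33 33)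
    (C := optQ e2 33 35) (D := optQ e3 35 35) a b ⟨_, _, quat_pair 35 (-51)⟩
    (optQ_pair_33_33 e1) (optQ_pair_33_35 e2) (optQ_pair e3 35 35)
  have ha : ∀ k, a k = 35 ∨ a k = -1 := by
    intro k
    fin_cases k <;> simp [a] <;> grind
  have hb : ∀ k, b k ≠ 0 := by
    intro k
    fin_cases k <;> simp [b] <;> grind
  have obs {p : ℕ} [Fact p.Prime] (hp : p % 4 = 3) (hs : ∃ s : ℚ_[p], s ^ 2 = -35) {m : ℤ}
      (hm : ‖((b 0 * b 1 * b 2 * b 3 : ℚ) : ℚ_[p])‖ = (p : ℝ) ^ (2 * m + 1)) : False :=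
    local_obstruction hp hs a b ha hb (fun k => φ (I k)) (fun k => φ (J k))
      (fun k => (hIJ k).map φ.toAlgHom) (fun k l h => (cII k l h).map φ)
      (fun k l h => (cIJ k l h).map φ) (fun k l h => (cJJ k l h).map φ) hm
  have hs3 : ∃ s : ℚ_[3], s ^ 2 = -35 := exists_sq_eq_neg_35 1 (by norm_num) (by norm_num)
  have hs11 : ∃ s : ℚ_[11], s ^ 2 = -35 := exists_sq_eq_neg_35 3 (by norm_num) (by norm_num)
  have h3 : ‖(3 : ℚ_[3])‖ = 3⁻¹ := by exact_mod_cast Padic.norm_p (p := 3)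
  have h11 : ‖(11 : ℚ_[11])‖ = 11⁻¹ := by exact_mod_cast Padic.norm_p (p := 11)
  have h35 : ‖(35 : ℚ_[3])‖ = 1 := by exact_mod_cast norm_int_eq_one (p := 3) 35 (by norm_num)
  have h35' : ‖(35 : ℚ_[11])‖ = 1 := by exact_mod_cast norm_int_eq_one (p := 11) 35 (by norm_num)
  have h51 : ‖(51 : ℚ_[3])‖ = 3⁻¹ := by
    have : ‖(17 : ℚ_[3])‖ = 1 := by exact_mod_cast norm_int_eq_one (p := 3) 17 (by norm_num)
    rw [show (51 : ℚ_[3]) = 3 * 17 by norm_num, norm_mul, h3, this, mul_one]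
  have h51' : ‖(51 : ℚ_[11])‖ = 1 := by exact_mod_cast norm_int_eq_one (p := 11) 51 (by norm_num)
  have h33 : ‖(33 : ℚ_[3])‖ = 3⁻¹ := by
    have : ‖(11 : ℚ_[3])‖ = 1 := by exact_mod_cast norm_int_eq_one (p := 3) 11 (by norm_num)
    rw [show (33 : ℚ_[3]) = 3 * 11 by norm_num, norm_mul, h3, this, mul_one]
  have h33' : ‖(33 : ℚ_[11])‖ = 11⁻¹ := by
    have : ‖(3 : ℚ_[11])‖ = 1 := by exact_mod_cast norm_int_eq_one (p := 11) 3 (by norm_num)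
    rw [show (33 : ℚ_[11]) = 11 * 3 by norm_num, norm_mul, h11, this, mul_one]
  have n35 : ‖((b 3 : ℚ) : ℚ_[3])‖ = 1 := by
    cases e3 <;> simp [b, h35]
  have n35' : ‖((b 3 : ℚ) : ℚ_[11])‖ = 1 := by
    cases e3 <;> simp [b, h35']
  have n51 : ‖((b 0 : ℚ) : ℚ_[3])‖ = 3⁻¹ := by simp [b, h51]
  have n51' : ‖((b 0 : ℚ) : ℚ_[11])‖ = 1 := by simp [b, h51']
  -- `b 0 * b 1 * b 2 * b 3` has odd valuation `1` or `3` at `3` if `e1 = e2`, and `1` at `11`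
  -- otherwise; `m` records it as `-(2 * m + 1)`
  cases e1 <;> cases e2
  · refine obs (p := 3) (m := -1) rfl hs3 ?_
    push_cast
    simp only [norm_mul, n35, n51]
    simp [b]
  · refine obs (p := 11) (m := -1) rfl hs11 ?_
    push_cast
    simp only [norm_mul, n35', n51']
    simp [b, h33']
  · refine obs (p := 11) (m := -1) rfl hs11 ?_
    push_cast
    simp only [norm_mul, n35', n51']
    simp [b, h33']
  · refine obs (p := 3) (m := -2) rfl hs3 ?_
    push_cast
    simp only [norm_mul, n35, n51]
    simp [b, h33]
    norm_num

/-! ### Split symbols and the isomorphism between `(35, -51)` and `(33, 14)` -/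

/-- If `b` is a norm from `ℚ(√a)`, then `(a, b)` is split: `i` acts on `ℚ(√a)` as multiplication
by `√a`, and `j` as conjugation followed by multiplication by `x + y√a`. -/
theorem split_of_norm {a b x y : ℚ} (ha : a ≠ 0) (hb : b ≠ 0) (h : x ^ 2 - a * y ^ 2 = b) :
    Nonempty (ℍ[ℚ, a, b] ≃ₐ[ℚ] Matrix (Fin 2) (Fin 2) ℚ) := by
  let B : QuaternionAlgebra.Basis (Matrix (Fin 2) (Fin 2) ℚ) a 0 b :=
    { i := !![0, a; 1, 0]
      j := !![x, -(a * y); y, -x]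
      k := !![a * y, -(a * x); x, -(a * y)]
      i_mul_i := by
        ext i j
        fin_cases i <;> fin_cases j <;> simp
      j_mul_j := by
        rw [← h]
        ext i j
        fin_cases i <;> fin_cases j <;> simp <;> ring
      i_mul_j := by
        ext i j
        fin_cases i <;> fin_cases j <;> simp
      j_mul_i := by
        ext i j
        fin_cases i <;> fin_cases j <;> simp <;> ring }
  have hinj : Function.Injective B.liftHom := by
    rw [injective_iff_map_eq_zero]
    intro q hq
    have e (i j : Fin 2) : B.liftHom q i j = 0 := by rw [hq]; rfl
    have e00 := e 0 0
    have e01 := e 0 1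
    have e10 := e 1 0
    have e11 := e 1 1
    simp [B, QuaternionAlgebra.Basis.lift, Matrix.algebraMap_matrix_apply] at e00 e01 e10 e11
    have hI : q.imI = 0 := by
      have : a * q.imI = 0 := by linear_combination (a * e10 + e01) / 2
      exact (mul_eq_zero.mp this).resolve_left ha
    have hJ : q.imJ = 0 := by
      have : b * q.imJ = 0 := by
        linear_combination x * (e00 - e11) / 2 - a * y * (e10 - hI) - q.imJ * h
      exact (mul_eq_zero.mp this).resolve_left hb
    have hK : q.imK = 0 := by
      have : b * q.imK = 0 := by
        linear_combination x * (e10 - hI) - y * (e00 - e11) / 2 - q.imK * h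
      exact (mul_eq_zero.mp this).resolve_left hb
    have hre : q.re = 0 := by linear_combination (e00 + e11) / 2
    ext <;> simp [hI, hJ, hK, hre]
  have hd : Module.finrank ℚ ℍ[ℚ, a, b] = Module.finrank ℚ (Matrix (Fin 2) (Fin 2) ℚ) := by
    rw [QuaternionAlgebra.finrank_eq_four, Module.finrank_matrix]
    simp
  have hsurj : Function.Surjective B.liftHom :=
    (LinearMap.injective_iff_surjective_of_finrank_eq_finrank
      (f := B.liftHom.toLinearMap) hd).mp hinj
  exact ⟨AlgEquiv.ofBijective B.liftHom ⟨hinj, hsurj⟩⟩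

theorem tensor_split {A B C D : Type} [Ring A] [Algebra ℚ A] [Ring B] [Algebra ℚ B]
    [Ring C] [Algebra ℚ C] [Ring D] [Algebra ℚ D] (eA : A ≃ₐ[ℚ] Matrix (Fin 2) (Fin 2) ℚ)
    (eB : B ≃ₐ[ℚ] Matrix (Fin 2) (Fin 2) ℚ) (eC : C ≃ₐ[ℚ] Matrix (Fin 2) (Fin 2) ℚ)
    (eD : D ≃ₐ[ℚ] Matrix (Fin 2) (Fin 2) ℚ) :
    Nonempty ((A ⊗[ℚ] (B ⊗[ℚ] (C ⊗[ℚ] D))) ≃ₐ[ℚ] Matrix (Fin 16) (Fin 16) ℚ) :=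
  let eCD := (Algebra.TensorProduct.congr eC eD).trans
    (Matrix.kroneckerAlgEquiv (Fin 2) (Fin 2) ℚ)
  let eBCD := (Algebra.TensorProduct.congr eB eCD).trans
    (Matrix.kroneckerAlgEquiv (Fin 2) (Fin 2 × Fin 2) ℚ)
  let eABCD := (Algebra.TensorProduct.congr eA eBCD).trans
    (Matrix.kroneckerAlgEquiv (Fin 2) (Fin 2 × Fin 2 × Fin 2) ℚ)
  ⟨eABCD.trans (Matrix.reindexAlgEquiv ℚ ℚ (Fintype.equivFinOfCardEq (by simp)))⟩

theorem memS_of_split {a b : ℚ} (h : Nonempty (ℍ[ℚ, a, b] ≃ₐ[ℚ] Matrix (Fin 2) (Fin 2) ℚ)) :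
    memS a b := by
  obtain ⟨φ⟩ := h
  have e (c d : ℚ) : optQ false c d ≃ₐ[ℚ] Matrix (Fin 2) (Fin 2) ℚ :=
    (AlgEquiv.refl : Matrix (Fin 2) (Fin 2) ℚ ≃ₐ[ℚ] Matrix (Fin 2) (Fin 2) ℚ)
  exact ⟨false, false, false, tensor_split φ (e _ _) (e _ _) (e _ _)⟩

/-- In `(33, 14)` the pure quaternions `(7i - 22j + 3k) / 11` and `(2i - 3j + k) / 2` have squares
`35` and `-51` and anticommute, so they generate a copy of `(35, -51)`. -/
theorem quatEq_35_33 : quatEq 35 (-51) 33 14 := by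
  let B : QuaternionAlgebra.Basis ℍ[ℚ, 33, 14] (35 : ℚ) 0 (-51) :=
    { i := ⟨0, 7 / 11, -2, 3 / 11⟩
      j := ⟨0, 1, -3 / 2, 1 / 2⟩
      k := ⟨0, 7 / 11, -2, 3 / 11⟩ * ⟨0, 1, -3 / 2, 1 / 2⟩
      i_mul_i := by ext <;> simp <;> norm_num
      j_mul_j := by ext <;> simp <;> norm_num
      i_mul_j := rfl
      j_mul_i := by ext <;> simp <;> norm_num }
  have hinj : Function.Injective B.liftHom := by
    rw [injective_iff_map_eq_zero]
    intro q hq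
    have e0 := congrArg QuaternionAlgebra.re hq
    have e1 := congrArg QuaternionAlgebra.imI hq
    have e2 := congrArg QuaternionAlgebra.imJ hq
    have e3 := congrArg QuaternionAlgebra.imK hq
    simp [B, QuaternionAlgebra.Basis.lift] at e0 e1 e2 e3
    ext <;> simp <;> linarith
  have hd : Module.finrank ℚ ℍ[ℚ, 35, -51] = Module.finrank ℚ ℍ[ℚ, 33, 14] := by
    rw [QuaternionAlgebra.finrank_eq_four, QuaternionAlgebra.finrank_eq_four]
  have hsurj : Function.Surjective B.liftHom :=
    (LinearMap.injective_iff_surjective_of_finrank_eq_finrank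
      (f := B.liftHom.toLinearMap) hd).mp hinj
  exact ⟨AlgEquiv.ofBijective B.liftHom ⟨hinj, hsurj⟩⟩

/-- there exist `f, g ∈ ℚ×` with `(33,f) ∈ S`, `(35,g) ∈ S`,
`(35,f) = (33,g)` in `Br(ℚ)` and `(35,f) ∉ S`,
where `S = ⟨(33,33),(33,35),(35,35)⟩`. -/
theorem stmt14 :
    ∃ f g : ℚ, f ≠ 0 ∧ g ≠ 0 ∧
      memS 33 f ∧ memS 35 g ∧ quatEq 35 f 33 g ∧ ¬ memS 35 f := by
  refine ⟨-51, 14, by norm_num, by norm_num, memS_of_split ?_, memS_of_split ?_, quatEq_35_33,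
    not_memS⟩
  · exact split_of_norm (x := 9) (y := 2) (by norm_num) (by norm_num) (by norm_num)
  · exact split_of_norm (x := 7) (y := 1) (by norm_num) (by norm_num) (by norm_num)
end

section
/- For all f, g ∈ ℚ×: if (5, f) = 0 and (2501, g) = 0 and (2501, f) = (5, g) in Br(ℚ), then (2501, f) = 0 (and hence also (5, g) = 0), where 2501 = 41·61. -/
/-!
The proof is local at the primes inert in `ℚ(√5)` and ends with arithmetic of `ℚ(√5)`.

* A square root of `2501` in `ℍ[ℚ,5,g]`, which exists by the isomorphism with `ℍ[ℚ,2501,f]`, is a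
  pure quaternion, so `2501 - 5a² = g (b² - 5c²)` for some rational `a, b, c`.
  A nilpotent of `ℍ[ℚ,2501,g] ≃ M₂(ℚ)` gives `-2501 a² = g (b² - 2501 c²)`.
* Values of the norm form of `ℚ(√D)` have even valuation at primes inert in `ℚ(√D)`
  (`even_val_norm`). Let `p` be inert in `ℚ(√5)`. Then `p` is inert in `ℚ(√2501)` (this includes
  `p = 2`, as `2501 ≡ 5 mod 8`) or in `ℚ(√12505)`, since `5` is a square modulo `41` and `61`.
  In the first case the second equation shows that `v_p(g)` is even; in the other case
  the first one does, because `-5 (2501 - 5a²)` is a norm from `ℚ(√12505)`.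
* A rational number with even valuation at all primes inert in `ℚ(√5)` is a norm
  from `ℚ(√5)`: this is a descent (`natNorm5`), where signs do not matter because `-1 = 2² - 5`.
  Hence `ℍ[ℚ,5,g]` splits, and so does the isomorphic algebra `ℍ[ℚ,2501,f]`.
-/

open Quaternion

/-- Triviality of the quaternion Brauer class `(a,b)` in `Br(ℚ)`: the class `(a,b)` is
zero iff the quaternion algebra is split, i.e. isomorphic to `M₂(ℚ)`. -/
def quatSplit (a b : ℚ) : Prop :=
  Nonempty (ℍ[ℚ, a, b] ≃ₐ[ℚ] Matrix (Fin 2) (Fin 2) ℚ)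

/-! ### Inert primes and valuations of norms -/

/-- The prime `q` is inert in `ℚ(√D)`. At `q = 2` only the congruence `D ≡ 5 mod 8` is used;
for odd `q` the condition is that `D` is not a square modulo `q`. -/
def InertAt (q : ℕ) (D : ℤ) : Prop :=
  (q = 2 ∧ D % 8 = 5) ∨ (q ≠ 2 ∧ ¬ IsSquare (D : ZMod q))

/-- For odd `q` a primitive pair has norm prime to `q`; for `q = 2` and `x`, `y` both odd
the norm is `4` modulo `8`, of valuation `2`. -/
lemma even_val_norm_coprime {q : ℕ} [hq : Fact q.Prime] {D : ℤ} (h : InertAt q D) {x y : ℤ}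
    (hxy : IsCoprime x y) : Even (padicValInt q (x ^ 2 - D * y ^ 2)) := by
  rcases h with ⟨rfl, hD⟩ | ⟨_, hD⟩
  · by_cases hodd : (x ^ 2 - D * y ^ 2) % 2 = 0
    · have key : (x ^ 2 - D * y ^ 2) % 8 = 4 := by
        have hx8 : x % 8 = 0 ∨ x % 8 = 1 ∨ x % 8 = 2 ∨ x % 8 = 3 ∨ x % 8 = 4 ∨ x % 8 = 5 ∨
          x % 8 = 6 ∨ x % 8 = 7 := by omega
        have hy8 : y % 8 = 0 ∨ y % 8 = 1 ∨ y % 8 = 2 ∨ y % 8 = 3 ∨ y % 8 = 4 ∨ y % 8 = 5 ∨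
          y % 8 = 6 ∨ y % 8 = 7 := by omega
        have hne : ¬ (x % 2 = 0 ∧ y % 2 = 0) := by
          rintro ⟨h1, h2⟩
          have := hxy.isUnit_of_dvd' (Int.dvd_of_emod_eq_zero h1) (Int.dvd_of_emod_eq_zero h2)
          rw [Int.isUnit_iff] at this
          omega
        have h8 : (x ^ 2 - D * y ^ 2) % 8 = ((x % 8) ^ 2 - 5 * (y % 8) ^ 2) % 8 := by
          rw [← hD]
          simp [Int.sub_emod, Int.mul_emod, pow_two]
        have h2 : (x ^ 2 - D * y ^ 2) % 8 % 2 = 0 := by omega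
        rw [h8] at h2 ⊢
        rcases hx8 with hx | hx | hx | hx | hx | hx | hx | hx <;>
        rcases hy8 with hy | hy | hy | hy | hy | hy | hy | hy <;>
        rw [hx, hy] at h2 ⊢ <;> omega
      have hne : x ^ 2 - D * y ^ 2 ≠ 0 := by omega
      have h4 : padicValInt 2 (x ^ 2 - D * y ^ 2) = 2 := by
        apply le_antisymm
        · by_contra hlt
          have h3 : 3 ≤ padicValInt 2 (x ^ 2 - D * y ^ 2) := by omega
          have := (padicValInt_dvd_iff (p := 2) 3 (x ^ 2 - D * y ^ 2)).2 (Or.inr h3)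
          norm_num at this
          omega
        · have := (padicValInt_dvd_iff (p := 2) 2 (x ^ 2 - D * y ^ 2)).1
            (by norm_num; omega)
          exact this.resolve_left hne
      rw [h4]
      exact even_two
    · rw [padicValInt.eq_zero_of_not_dvd (by norm_num; omega)]
      exact Even.zero
  · rw [padicValInt.eq_zero_of_not_dvd]
    · exact Even.zero
    · intro hdvd
      have h0 : ((x ^ 2 - D * y ^ 2 : ℤ) : ZMod q) = 0 :=
        (ZMod.intCast_zmod_eq_zero_iff_dvd _ _).2 hdvd
      push_cast at h0
      by_cases hy : (y : ZMod q) = 0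
      · have hx : (x : ZMod q) = 0 := by
          rw [hy] at h0
          simpa using h0
        have := hxy.isUnit_of_dvd' ((ZMod.intCast_zmod_eq_zero_iff_dvd _ q).1 hx)
          ((ZMod.intCast_zmod_eq_zero_iff_dvd _ q).1 hy)
        exact (Nat.prime_iff_prime_int.1 hq.out).not_isUnit this
      · exact hD ⟨x / y, by field_simp; linear_combination -h0⟩

lemma even_val_norm_int {q : ℕ} [hq : Fact q.Prime] {D : ℤ} (h : InertAt q D) (x y : ℤ) :
    Even (padicValInt q (x ^ 2 - D * y ^ 2)) := by
  by_cases h0 : x ^ 2 - D * y ^ 2 = 0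
  · simp [h0]
  have hg : Int.gcd x y ≠ 0 := by
    intro hg
    rw [Int.gcd_eq_zero_iff] at hg
    simp [hg.1, hg.2] at h0
  obtain ⟨x', y', hc, hx, hy⟩ := Int.exists_gcd_one (Nat.pos_of_ne_zero hg)
  have hxy : x ^ 2 - D * y ^ 2 = (Int.gcd x y : ℤ) ^ 2 * (x' ^ 2 - D * y' ^ 2) := by
    generalize (Int.gcd x y : ℤ) = d at hx hy
    rw [hx, hy]
    ring
  have hg' : (Int.gcd x y : ℤ) ≠ 0 := by exact_mod_cast hg
  rw [hxy] at h0
  rw [hxy, padicValInt.mul (pow_ne_zero 2 hg') (right_ne_zero_of_mul h0),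
    pow_two (Int.gcd x y : ℤ), padicValInt.mul hg' hg']
  exact (Even.add_self _).add (even_val_norm_coprime h (Int.isCoprime_iff_gcd_eq_one.2 hc))

/-- Valid also when the norm vanishes, since `padicValRat q 0 = 0`. -/
lemma even_val_norm {q : ℕ} [hq : Fact q.Prime] {D : ℤ} (h : InertAt q D) (x y : ℚ) :
    Even (padicValRat q (x ^ 2 - D * y ^ 2)) := by
  by_cases h0 : x ^ 2 - D * y ^ 2 = 0
  · simp [h0]
  have hxd : (x.den : ℚ) ≠ 0 := by exact_mod_cast x.den_nz
  have hyd : (y.den : ℚ) ≠ 0 := by exact_mod_cast y.den_nz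
  have hd : (x.den * y.den : ℚ) ≠ 0 := mul_ne_zero hxd hyd
  have key : (((x.num * y.den) ^ 2 - D * (y.num * x.den) ^ 2 : ℤ) : ℚ)
      = (x.den * y.den : ℚ) ^ 2 * (x ^ 2 - D * y ^ 2) := by
    push_cast
    rw [← Rat.mul_den_eq_num x, ← Rat.mul_den_eq_num y]
    ring
  have h1 := congrArg (padicValRat q) key
  rw [padicValRat.of_int, padicValRat.mul (pow_ne_zero 2 hd) h0, pow_two (_ * _ : ℚ),
    padicValRat.mul hd hd] at h1
  have h2 := even_val_norm_int h (x.num * y.den) (y.num * x.den)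
  rw [← Int.even_coe_nat, h1, Int.even_add] at h2
  exact h2.1 (Even.add_self _)

/-! ### Norms from `ℚ(√5)` -/

/-- The rational `r` is a norm from `ℚ(√5)`. -/
def IsNorm5 (r : ℚ) : Prop := ∃ x y : ℚ, r = x ^ 2 - 5 * y ^ 2

lemma IsNorm5.mul {r s : ℚ} (hr : IsNorm5 r) (hs : IsNorm5 s) : IsNorm5 (r * s) := by
  obtain ⟨x, y, rfl⟩ := hr
  obtain ⟨z, w, rfl⟩ := hs
  exact ⟨x * z + 5 * y * w, x * w + y * z, by ring⟩

lemma IsNorm5.sq (r : ℚ) : IsNorm5 (r ^ 2) := ⟨r, 0, by ring⟩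

lemma IsNorm5.neg {r : ℚ} (hr : IsNorm5 r) : IsNorm5 (-r) := by
  have : IsNorm5 (-1) := ⟨2, 1, by norm_num⟩
  simpa using this.mul hr

lemma IsNorm5.inv {r : ℚ} (hr : IsNorm5 r) : IsNorm5 r⁻¹ := by
  by_cases h : r = 0
  · simpa [h] using hr
  · have := hr.mul (IsNorm5.sq r⁻¹)
    convert this using 1
    field_simp

/-- A prime that is not inert in `ℚ(√5)`, other than `5`, divides some `x² - 5` with a cofactor
smaller than the prime. -/
lemma exists_small_cofactor {p : ℕ} [hp : Fact p.Prime] (hp5 : p ≠ 5) (h : ¬ InertAt p 5) :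
    ∃ x m : ℤ, x ^ 2 - 5 = p * m ∧ m.natAbs < p := by
  have hp2 : p ≠ 2 := fun h2 => h (Or.inl ⟨h2, by norm_num⟩)
  have hs : IsSquare ((5 : ℤ) : ZMod p) := by
    by_contra hs
    exact h (Or.inr ⟨hp2, hs⟩)
  have hp3 : p ≠ 3 := by
    rintro rfl
    clear * - hs
    revert hs
    decide +revert
  have hp7 : 7 ≤ p := by
    have := hp.out.two_le
    by_contra hlt
    have h46 : p = 4 ∨ p = 6 := by omega
    rcases h46 with h4 | h4 <;> exact absurd hp.out (by rw [h4]; norm_num)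
  obtain ⟨s, hs⟩ := hs
  have hdvd : (p : ℤ) ∣ s.valMinAbs ^ 2 - 5 := by
    rw [← ZMod.intCast_zmod_eq_zero_iff_dvd]
    push_cast at hs ⊢
    rw [hs]
    ring
  obtain ⟨m, hm⟩ := hdvd
  refine ⟨s.valMinAbs, m, hm, ?_⟩
  have hb : s.valMinAbs.natAbs ≤ p / 2 := ZMod.natAbs_valMinAbs_le s
  have h1 : |s.valMinAbs| * 2 ≤ p := by
    rw [Int.abs_eq_natAbs]
    omega
  have h2 : s.valMinAbs ^ 2 * 4 ≤ (p : ℤ) ^ 2 := by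
    have := abs_nonneg s.valMinAbs
    rw [← sq_abs]
    nlinarith
  have h7 : (7 : ℤ) ≤ p := by exact_mod_cast hp7
  have h3 : m < p := by nlinarith [sq_nonneg (p : ℤ)]
  have h4 : -(p : ℤ) < m := by nlinarith [sq_nonneg s.valMinAbs]
  omega

lemma sq_sub_five_ne_zero (x : ℤ) : x ^ 2 - 5 ≠ 0 := by
  intro h
  have h1 : x ≤ 2 := by nlinarith
  have h2 : -2 ≤ x := by nlinarith
  interval_cases x <;> omega

/-- Descent: a non-inert prime divides `x² - 5` with a smaller cofactor, whose valuations at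
inert primes are again even; other integers reduce to proper factors. -/
lemma natNorm5 (n : ℕ) (hn : n ≠ 0)
    (h : ∀ q : ℕ, q.Prime → InertAt q 5 → Even (padicValNat q n)) : IsNorm5 n := by
  induction n using Nat.strong_induction_on with
  | _ n ih =>
    by_cases h1 : n = 1
    · exact ⟨1, 0, by simp [h1]⟩
    obtain ⟨p, hp, k, rfl⟩ := Nat.exists_prime_and_dvd h1
    have : Fact p.Prime := ⟨hp⟩
    have hp0 : p ≠ 0 := hp.ne_zero
    have hp2 := hp.two_le
    have hk : k ≠ 0 := right_ne_zero_of_mul hn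
    by_cases hin : InertAt p 5
    · have he := h p hp hin
      rw [padicValNat.mul hp0 hk, padicValNat_self] at he
      have hpk : p ∣ k := by
        apply dvd_of_one_le_padicValNat
        by_contra h0
        have h00 : padicValNat p k = 0 := by omega
        rw [h00] at he
        exact absurd he (by decide)
      obtain ⟨l, rfl⟩ := hpk
      have hl : l ≠ 0 := right_ne_zero_of_mul hk
      have hlN : IsNorm5 l := by
        refine ih l ?_ hl ?_
        · have : 0 < l := Nat.pos_of_ne_zero hl
          have : l < p * l := by nlinarith
          nlinarith
        · intro q hq hqi
          have : Fact q.Prime := ⟨hq⟩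
          have := h q hq hqi
          rw [padicValNat.mul hp0 hk, padicValNat.mul hp0 hl, ← add_assoc] at this
          exact (Nat.even_add.1 this).1 (Even.add_self _)
      have := (IsNorm5.sq (p : ℚ)).mul hlN
      convert this using 1
      push_cast
      ring
    · have hval : ∀ q : ℕ, q.Prime → InertAt q 5 → padicValNat q p = 0 := by
        intro q hq hqi
        apply padicValNat.eq_zero_of_not_dvd
        intro hqp
        rw [Nat.prime_dvd_prime_iff_eq hq hp] at hqp
        exact hin (hqp ▸ hqi)
      by_cases hk1 : k = 1
      · subst hk1
        by_cases hp5 : p = 5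
        · exact ⟨5, 2, by rw [hp5]; norm_num⟩
        obtain ⟨x, m, hxm, hm⟩ := exists_small_cofactor hp5 hin
        have hm0 : m ≠ 0 := by
          rintro rfl
          exact sq_sub_five_ne_zero x (by simpa using hxm)
        have hmN : IsNorm5 m.natAbs := by
          refine ih _ (by omega) (by omega) ?_
          intro q hq hqi
          have : Fact q.Prime := ⟨hq⟩
          have he := even_val_norm_int hqi x 1
          rw [one_pow, mul_one, hxm, padicValInt.mul (by exact_mod_cast hp0) hm0,
            padicValInt.of_nat, hval q hq hqi, zero_add] at he
          exact he
        have hmN' : IsNorm5 m := by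
          rw [Nat.cast_natAbs, Int.cast_abs] at hmN
          rcases abs_choice (m : ℚ) with hm' | hm'
          · rwa [hm'] at hmN
          · rw [hm'] at hmN
            simpa using hmN.neg
        have hx : IsNorm5 ((x : ℚ) ^ 2 - 5) := ⟨x, 1, by ring⟩
        have hxm' : (x : ℚ) ^ 2 - 5 = p * m := by exact_mod_cast hxm
        have := hx.mul hmN'.inv
        have hmq : (m : ℚ) ≠ 0 := by exact_mod_cast hm0
        rw [hxm', mul_assoc, mul_inv_cancel₀ hmq, mul_one] at this
        simpa using this
      · have hk2 : 2 ≤ k := by omega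
        have hpN : IsNorm5 p := ih p (by nlinarith) hp0 fun q hq hqi => by
          simp [hval q hq hqi]
        have hkN : IsNorm5 k := ih k (by nlinarith) hk fun q hq hqi => by
          have : Fact q.Prime := ⟨hq⟩
          have := h q hq hqi
          rwa [padicValNat.mul hp0 hk, hval q hq hqi, zero_add] at this
        push_cast
        exact hpN.mul hkN

lemma isNorm5_of_even {g : ℚ} (hg : g ≠ 0)
    (h : ∀ q : ℕ, q.Prime → InertAt q 5 → Even (padicValRat q g)) : IsNorm5 g := by
  have hd : (g.den : ℚ) ≠ 0 := by exact_mod_cast g.den_nz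
  have hnum : g.num ≠ 0 := by simpa using hg
  -- `g * g.den²` is the integer `g.num * g.den`, with the same parities of valuations as `g`.
  have hN : IsNorm5 ((g.num.natAbs * g.den : ℕ) : ℚ) := by
    refine natNorm5 _ (mul_ne_zero (by omega) g.den_nz) fun q hq hqi => ?_
    have : Fact q.Prime := ⟨hq⟩
    have he := h q hq hqi
    rw [padicValNat.mul (by omega) g.den_nz]
    rw [padicValRat_def] at he
    unfold padicValInt at he
    rw [Int.even_sub, Int.even_coe_nat, Int.even_coe_nat] at he
    rwa [Nat.even_add]
  have habs : IsNorm5 ((g.num * g.den : ℚ)) := by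
    rw [Nat.cast_mul, Nat.cast_natAbs, Int.cast_abs] at hN
    rcases abs_choice (g.num : ℚ) with hm' | hm'
    · rwa [hm'] at hN
    · rw [hm'] at hN
      simpa using hN.neg
  have := habs.mul (IsNorm5.sq (g.den : ℚ)⁻¹)
  convert this using 1
  rw [← Rat.mul_den_eq_num g]
  field_simp

/-! ### Quaternion algebras -/

/-- The matrices `i = [0 5; 1 0]` and `j = [u -5v; v -u]` satisfy the relations of `ℍ[ℚ,5,g]`
when `g = u² - 5v²`. -/
def splitBasis (u v : ℚ) :
    QuaternionAlgebra.Basis (Matrix (Fin 2) (Fin 2) ℚ) (5 : ℚ) 0 (u ^ 2 - 5 * v ^ 2) where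
  i := !![0, 5; 1, 0]
  j := !![u, -5 * v; v, -u]
  k := !![5 * v, -5 * u; u, -5 * v]
  i_mul_i := by
    ext a b; fin_cases a <;> fin_cases b <;> simp [Matrix.mul_apply, Fin.sum_univ_two]
  j_mul_j := by
    ext a b; fin_cases a <;> fin_cases b <;> simp [Matrix.mul_apply, Fin.sum_univ_two] <;> ring
  i_mul_j := by
    ext a b; fin_cases a <;> fin_cases b <;> simp [Matrix.mul_apply, Fin.sum_univ_two]
  j_mul_i := by
    ext a b; fin_cases a <;> fin_cases b <;> simp [Matrix.mul_apply, Fin.sum_univ_two] <;> ring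

lemma quatSplit_of_isNorm5 {g : ℚ} (hg : g ≠ 0) (h : IsNorm5 g) : quatSplit 5 g := by
  obtain ⟨u, v, rfl⟩ := h
  let φ := (splitBasis u v).liftHom
  have hinj : Function.Injective φ := by
    rw [injective_iff_map_eq_zero]
    intro x hx
    have hx' : ∀ a b, (splitBasis u v).lift x a b = 0 := fun a b => congrFun (congrFun hx a) b
    have e00 := hx' 0 0
    have e01 := hx' 0 1
    have e10 := hx' 1 0
    have e11 := hx' 1 1
    simp [QuaternionAlgebra.Basis.lift, splitBasis, Matrix.algebraMap_matrix_apply]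
      at e00 e01 e10 e11
    have hJ : x.imJ * (u ^ 2 - 5 * v ^ 2) = 0 := by
      linear_combination (e00 - e11) * u / 2 - v * (5 * e10 - e01) / 2
    have hK : x.imK * (u ^ 2 - 5 * v ^ 2) = 0 := by
      linear_combination u * (5 * e10 - e01) / 10 - v * (e00 - e11) / 2
    have hJ0 := (mul_eq_zero.1 hJ).resolve_right hg
    have hK0 := (mul_eq_zero.1 hK).resolve_right hg
    ext
    · simp [hJ0, hK0] at e00 ⊢; linarith
    · simp [hJ0, hK0] at e10 ⊢; linarith
    · simpa using hJ0
    · simpa using hK0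
  have hfin : Module.finrank ℚ ℍ[ℚ, 5, u ^ 2 - 5 * v ^ 2]
      = Module.finrank ℚ (Matrix (Fin 2) (Fin 2) ℚ) := by
    rw [QuaternionAlgebra.finrank_eq_four, Module.finrank_matrix]
    simp
  have hsurj : Function.Surjective φ :=
    (LinearMap.injective_iff_surjective_of_finrank_eq_finrank (f := φ.toLinearMap) hfin).1 hinj
  exact ⟨AlgEquiv.ofBijective φ ⟨hinj, hsurj⟩⟩

/-- A quaternion whose square is a scalar `r` that is not the square of a nonzero rational is
pure; the second conjunct expands its square in coordinates. -/
lemma pure_of_sq {a b r : ℚ} (hr : ∀ t : ℚ, t ≠ 0 → t ^ 2 ≠ r) (x : ℍ[ℚ, a, b])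
    (hx : x * x = algebraMap ℚ _ r) :
    x.re = 0 ∧ a * x.imI ^ 2 + b * (x.imJ ^ 2 - a * x.imK ^ 2) = r := by
  have e0 := congrArg QuaternionAlgebra.re hx
  have e1 := congrArg QuaternionAlgebra.imI hx
  have e2 := congrArg QuaternionAlgebra.imJ hx
  have e3 := congrArg QuaternionAlgebra.imK hx
  simp [QuaternionAlgebra.algebraMap_eq] at e0 e1 e2 e3
  have hre : x.re = 0 := by
    by_contra h
    have h1 : x.imI = 0 := by
      apply (mul_eq_zero.1 (_ : x.re * x.imI = 0)).resolve_left h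
      linarith
    have h2 : x.imJ = 0 := by
      apply (mul_eq_zero.1 (_ : x.re * x.imJ = 0)).resolve_left h
      linarith
    have h3 : x.imK = 0 := by
      apply (mul_eq_zero.1 (_ : x.re * x.imK = 0)).resolve_left h
      linarith
    rw [h1, h2, h3] at e0
    exact hr _ h (by linarith)
  refine ⟨hre, ?_⟩
  rw [hre] at e0
  linarith

lemma not_isSquare_2501 (t : ℚ) : t ^ 2 ≠ 2501 := by
  intro h
  have h1 : IsSquare ((2501 : ℕ) : ℚ) := ⟨t, by push_cast; linarith⟩
  rw [Rat.isSquare_natCast_iff] at h1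
  obtain ⟨r, hr⟩ := h1
  have h50 : r ≤ 50 ∨ 51 ≤ r := by omega
  rcases h50 with h | h <;> nlinarith

lemma not_isSquare_12505 (t : ℚ) : t ^ 2 ≠ 12505 := by
  intro h
  have h1 : IsSquare ((12505 : ℕ) : ℚ) := ⟨t, by push_cast; linarith⟩
  rw [Rat.isSquare_natCast_iff] at h1
  obtain ⟨r, hr⟩ := h1
  have h50 : r ≤ 111 ∨ 112 ≤ r := by omega
  rcases h50 with h | h <;> nlinarith

/-- An isotropic vector of the pure part of the norm form, given by a nilpotent matrix. -/
lemma exists_of_split {g : ℚ} (hg : g ≠ 0) (hs : quatSplit 2501 g) :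
    ∃ a b c : ℚ, a ≠ 0 ∧ -2501 * a ^ 2 = g * (b ^ 2 - 2501 * c ^ 2) := by
  obtain ⟨e⟩ := hs
  have hE : (!![0, 1; 0, 0] : Matrix (Fin 2) (Fin 2) ℚ) * !![0, 1; 0, 0] = 0 := by
    ext a b; fin_cases a <;> fin_cases b <;> simp
  set x := e.symm !![0, 1; 0, 0] with hx
  have hx0 : x ≠ 0 := by
    intro h0
    rw [hx, map_eq_zero_iff _ e.symm.injective] at h0
    have := congrFun (congrFun h0 0) 1
    simp at this
  obtain ⟨hre, hxx⟩ := pure_of_sq (r := 0) (fun t ht => pow_ne_zero 2 ht) x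
    (by rw [hx, ← map_mul, hE, map_zero, map_zero])
  refine ⟨x.imI, x.imJ, x.imK, fun hI => hx0 ?_, by linear_combination -hxx⟩
  have h0 : x.imJ ^ 2 - 2501 * x.imK ^ 2 = 0 := by
    rw [hI] at hxx
    simpa [hg] using hxx
  have hK : x.imK = 0 := by
    by_contra hK
    refine not_isSquare_2501 (x.imJ / x.imK) ?_
    field_simp
    linarith
  have hJ : x.imJ = 0 := by simpa [hK] using h0
  ext <;> simp [hre, hI, hJ, hK]

lemma exists_of_quatEq {f g : ℚ} (h : quatEq 2501 f 5 g) :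
    ∃ a b c : ℚ, 2501 - 5 * a ^ 2 = g * (b ^ 2 - 5 * c ^ 2) := by
  obtain ⟨e⟩ := h
  let i : ℍ[ℚ, 2501, f] := ⟨0, 1, 0, 0⟩
  have hi : i * i = algebraMap ℚ _ 2501 := by
    ext <;> simp [i, QuaternionAlgebra.algebraMap_eq]
  have := pure_of_sq (r := 2501) (fun t _ => not_isSquare_2501 t) (e i)
    (by rw [← map_mul, hi]; exact e.commutes _)
  exact ⟨(e i).imI, (e i).imJ, (e i).imK, by linear_combination -this.2⟩

/-! ### The local computation -/

/-- Apart from `q = 2` this is multiplicativity of the Legendre symbol, `12505` being `5 * 2501`,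
once `q` is known not to divide `2501`. -/
lemma inert_cases {q : ℕ} [hq : Fact q.Prime] (h : InertAt q 5) :
    InertAt q 2501 ∨ InertAt q 12505 := by
  rcases h with ⟨h2, _⟩ | ⟨h2, h5⟩
  · exact Or.inl (Or.inl ⟨h2, by norm_num⟩)
  · by_cases hs : IsSquare ((2501 : ℤ) : ZMod q)
    · refine Or.inr (Or.inr ⟨h2, fun hs' => h5 ?_⟩)
      by_cases h0 : ((2501 : ℤ) : ZMod q) = 0
      · -- `q` is `41` or `61`, where `5` is the square of `13`, resp. `26`.
        have hd : q ∣ 41 * 61 := by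
          have := (ZMod.intCast_zmod_eq_zero_iff_dvd _ q).1 h0
          norm_num
          exact_mod_cast this
        rcases (Nat.Prime.dvd_mul hq.out).1 hd with hd | hd
        · rw [Nat.prime_dvd_prime_iff_eq hq.out (by norm_num)] at hd
          subst hd
          exact ⟨13, by clear * -; decide +revert⟩
        · rw [Nat.prime_dvd_prime_iff_eq hq.out (by norm_num)] at hd
          subst hd
          exact ⟨26, by clear * -; decide +revert⟩
      · obtain ⟨s, hs⟩ := hs
        obtain ⟨t, ht⟩ := hs'
        have hs0 : s ≠ 0 := by
          rintro rfl
          exact h0 (by simpa using hs)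
        refine ⟨t / s, ?_⟩
        have : ((12505 : ℤ) : ZMod q) = (5 : ℤ) * (2501 : ℤ) := by norm_num
        rw [ht, hs] at this
        field_simp
        linear_combination -this
    · exact Or.inl (Or.inr ⟨h2, hs⟩)

lemma even_val_g {f g : ℚ} (hg : g ≠ 0) (h2501g : quatSplit 2501 g) (heq : quatEq 2501 f 5 g)
    (q : ℕ) (hq : q.Prime) (hqi : InertAt q 5) : Even (padicValRat q g) := by
  have : Fact q.Prime := ⟨hq⟩
  obtain ⟨a, b, c, ha, habc⟩ := exists_of_split hg h2501g
  rcases inert_cases hqi with hi | hi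
  · have hne : g * (b ^ 2 - 2501 * c ^ 2) ≠ 0 := by
      rw [← habc]
      exact mul_ne_zero (by norm_num) (pow_ne_zero 2 ha)
    have hv1 := even_val_norm hi b c
    -- `-2501 a² = 0² - 2501 a²` is itself a norm from `ℚ(√2501)`.
    have hv2 := even_val_norm hi 0 a
    push_cast at hv1 hv2
    have h0 : (0 : ℚ) ^ 2 - 2501 * a ^ 2 = g * (b ^ 2 - 2501 * c ^ 2) := by
      rw [← habc]; ring
    rw [h0, padicValRat.mul hg (right_ne_zero_of_mul hne), Int.even_add] at hv2
    exact hv2.2 hv1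
  · obtain ⟨a, b, c, habc⟩ := exists_of_quatEq heq
    have hne : g * (b ^ 2 - 5 * c ^ 2) ≠ 0 := by
      rw [← habc]
      intro h0
      exact not_isSquare_12505 (5 * a) (by linear_combination -5 * h0)
    have hv1 := even_val_norm hqi b c
    -- `-5 (2501 - 5a²) = (5a)² - 12505` and `-5 = 0² - 5 · 1²`.
    have hv2 := even_val_norm hi (5 * a) 1
    have hv3 := even_val_norm hqi 0 1
    push_cast at hv1 hv2 hv3
    have h0 : (5 * a) ^ 2 - 12505 * 1 ^ 2 = ((0 : ℚ) ^ 2 - 5 * 1 ^ 2) * (g * (b ^ 2 - 5 * c ^ 2)) := by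
      rw [← habc]; ring
    rw [h0, padicValRat.mul (by norm_num) hne, padicValRat.mul hg (right_ne_zero_of_mul hne),
      Int.even_add, Int.even_add] at hv2
    tauto

/-- for all `f, g ∈ ℚ×`, if `(5,f) = 0`, `(2501,g) = 0` and
`(2501,f) = (5,g)` in `Br(ℚ)`, then `(2501,f) = 0` (and hence also `(5,g) = 0`),
where `2501 = 41·61`. -/
theorem stmt16 (f g : ℚ) (hf : f ≠ 0) (hg : g ≠ 0)
    (h5f : quatSplit 5 f) (h2501g : quatSplit 2501 g) (heq : quatEq 2501 f 5 g) :
    quatSplit 2501 f ∧ quatSplit 5 g := by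
  have h5g : quatSplit 5 g :=
    quatSplit_of_isNorm5 hg (isNorm5_of_even hg (even_val_g hg h2501g heq))
  obtain ⟨e⟩ := heq
  obtain ⟨e'⟩ := h5g
  exact ⟨⟨e.trans e'⟩, ⟨e'⟩⟩
end

section
/- For every prime number p ∉ {5, 41, 61} that is a quadratic residue modulo 5 and modulo 61 but a quadratic non-residue modulo 41: (5, p) = 0 and (2501, p) ≠ 0 in Br(ℚ), where 2501 = 41·61. -/
/-!
Splitting of `(5, p)`. A quaternion algebra `(a, b)` is split as soon as `b = x² - a y²` is a norm
from `ℚ(√a)`: it then acts faithfully on `ℚ(√a) ≅ ℚ²`, with `i` acting as multiplication by `√a`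
and `j` as conjugation followed by multiplication by `x + y√a` (`quatSplit_of_norm`). By quadratic
reciprocity `5 ≡ c² (mod p)`, and Thue's pigeonhole argument (`thue`) gives `(X, Y) ≠ 0` with
`X ≡ c Y (mod p)` and `X², Y² < p`. So `X² - 5Y² = kp` with `-5 < k < 1`; irrationality of `√5`
excludes `k = 0`, and `X² ≡ kp ≡ ±k (mod 5)` excludes `k = -2, -3`. In the remaining cases
`k = -1, -4`, the identity `-1 = (1/2)² - 5 (1/2)²` shows that `p` is a norm from `ℚ(√5)`.

Non-splitting of `(2501, p)`. A split algebra contains a nonzero element of square zero, as `M₂(ℚ)`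
does; such an element is pure and yields a nontrivial zero of `a s² + b t² - a b u²`
(`exists_isotropic_of_quatSplit`). For `a = 2501 = 41 · 61` and `b = p` a non-residue modulo `41`,
descent at `41` shows that the form has no nontrivial integral zero (`descent`).
-/

open Quaternion

/-- `(a, b)` is split when `b ≠ 0` is a norm from `ℚ(√a)`. -/
theorem quatSplit_of_norm (a b x y : ℚ) (ha : a ≠ 0) (hb : b ≠ 0) (h : b = x ^ 2 - a * y ^ 2) :
    quatSplit a b := by
  -- The matrices of `√a` and of `z ↦ (x + y√a) * conj z` in the basis `1, √a` of `ℚ(√a)`.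
  let B : QuaternionAlgebra.Basis (Matrix (Fin 2) (Fin 2) ℚ) a 0 b :=
    { i := !![0, a; 1, 0]
      j := !![x, -(a * y); y, -x]
      k := !![a * y, -(a * x); x, -(a * y)]
      i_mul_i := by
        ext i j; fin_cases i <;> fin_cases j <;> simp [Matrix.mul_apply, Fin.sum_univ_two]
      j_mul_j := by
        ext i j; fin_cases i <;> fin_cases j <;>
          simp [Matrix.mul_apply, Fin.sum_univ_two, h] <;> ring
      i_mul_j := by
        ext i j; fin_cases i <;> fin_cases j <;> simp [Matrix.mul_apply, Fin.sum_univ_two]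
      j_mul_i := by
        ext i j; fin_cases i <;> fin_cases j <;>
          simp [Matrix.mul_apply, Fin.sum_univ_two] <;> ring }
  have hinj : Function.Injective B.liftHom.toLinearMap := by
    rw [← LinearMap.ker_eq_bot, LinearMap.ker_eq_bot']
    rintro ⟨r, s, t, u⟩ hq
    have hm : ∀ m n, (B.lift ⟨r, s, t, u⟩) m n = 0 := by
      intro m n
      have := congrFun (congrFun hq m) n
      simpa using this
    have h00 := hm 0 0
    have h01 := hm 0 1
    have h10 := hm 1 0
    have h11 := hm 1 1
    simp [QuaternionAlgebra.Basis.lift, B, Matrix.algebraMap_matrix_apply] at h00 h01 h10 h11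
    have hr : r = 0 := by linarith
    have h01' : s - t * y - u * x = 0 := by
      apply mul_left_cancel₀ ha; linarith
    have hs : s = 0 := by linarith
    subst hr hs
    have ht : t = 0 := by
      apply mul_left_cancel₀ hb; rw [h]; linear_combination x * h00 - a * y * h10
    have hu : u = 0 := by
      apply mul_left_cancel₀ hb; rw [h]; linear_combination x * h10 - y * h00
    subst ht hu
    rfl
  have hsurj : Function.Surjective B.liftHom.toLinearMap := by
    refine (LinearMap.injective_iff_surjective_of_finrank_eq_finrank ?_).1 hinj
    rw [QuaternionAlgebra.finrank_eq_four, Module.finrank_matrix]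
    simp
  exact ⟨AlgEquiv.ofBijective B.liftHom ⟨hinj, hsurj⟩⟩

/-- A nonzero nilpotent of `M₂(ℚ)` transports to a nontrivial zero of the pure norm form. -/
theorem exists_isotropic_of_quatSplit (a b : ℚ) (h : quatSplit a b) :
    ∃ s t u : ℚ, (s ≠ 0 ∨ t ≠ 0 ∨ u ≠ 0) ∧ a * s ^ 2 + b * t ^ 2 = a * b * u ^ 2 := by
  obtain ⟨e⟩ := h
  obtain ⟨q, hq⟩ := e.surjective !![0, 1; 0, 0]
  have hq0 : q ≠ 0 := by
    rintro rfl
    have := congrFun (congrFun hq 0) 1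
    simp at this
  have hqq : q * q = 0 := by
    apply e.injective
    rw [map_mul, hq, map_zero]
    ext i j; fin_cases i <;> fin_cases j <;> simp [Matrix.mul_apply, Fin.sum_univ_two]
  obtain ⟨r, s, t, u⟩ := q
  rw [QuaternionAlgebra.mk_mul_mk, QuaternionAlgebra.ext_iff] at hqq
  simp at hqq
  obtain ⟨e0, e1, e2, e3⟩ := hqq
  have g1 : r * s = 0 := by linarith
  have g2 : r * t = 0 := by linarith
  have g3 : r * u = 0 := by linarith
  have hr : r = 0 := by
    by_contra hr
    have hs : s = 0 := by simpa [hr] using g1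
    have ht : t = 0 := by simpa [hr] using g2
    have hu : u = 0 := by simpa [hr] using g3
    subst hs ht hu
    simp at e0
    exact hr e0
  subst hr
  refine ⟨s, t, u, ?_, by linarith⟩
  by_contra hc
  push Not at hc
  obtain ⟨rfl, rfl, rfl⟩ := hc
  exact hq0 rfl

/-- `2501 s² + p t² = 2501 p u²` forces `41 ∣ t`, then `s² ≡ p u² (mod 41)`, hence `41 ∣ s, u`. -/
theorem dvd_of_isotropic (p : ℕ) (hn : ¬ IsSquare (p : ZMod 41)) (s t u : ℤ)
    (h : 2501 * s ^ 2 + p * t ^ 2 = 2501 * p * u ^ 2) :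
    (41 : ℤ) ∣ s ∧ (41 : ℤ) ∣ t ∧ (41 : ℤ) ∣ u := by
  have h2501 : (2501 : ZMod 41) = 0 := by decide
  have h41 : (41 : ZMod 41) = 0 := by decide
  have h61 : (61 : ZMod 41) ≠ 0 := by decide
  have : Fact (Nat.Prime 41) := ⟨by norm_num⟩
  have hp0 : (p : ZMod 41) ≠ 0 := fun h0 => hn (by rw [h0]; exact IsSquare.zero)
  have key : ∀ z : ℤ, (z : ZMod 41) = 0 → (41 : ℤ) ∣ z := fun z hz =>
    (ZMod.intCast_zmod_eq_zero_iff_dvd z 41).1 hz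
  have ht : (41 : ℤ) ∣ t := by
    apply key
    have := congrArg (Int.cast : ℤ → ZMod 41) h
    push_cast at this
    rw [h2501] at this
    simpa [hp0] using this
  obtain ⟨t', rfl⟩ := ht
  have h' : 61 * s ^ 2 + 41 * p * t' ^ 2 = 61 * p * u ^ 2 := by linarith
  have hz : (s : ZMod 41) ^ 2 = p * u ^ 2 := by
    have := congrArg (Int.cast : ℤ → ZMod 41) h'
    push_cast at this
    rw [h41] at this
    apply mul_left_cancel₀ h61
    linear_combination this
  have hu : (u : ZMod 41) = 0 := by
    by_contra hu
    exact hn ⟨s / u, by field_simp; exact hz.symm⟩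
  have hs : (s : ZMod 41) = 0 := by simpa [hu] using hz
  exact ⟨key _ hs, dvd_mul_right _ _, key _ hu⟩

theorem descent (p : ℕ) (hn : ¬ IsSquare (p : ZMod 41)) : ∀ (n : ℕ) (s t u : ℤ),
    s.natAbs + t.natAbs + u.natAbs ≤ n →
    2501 * s ^ 2 + p * t ^ 2 = 2501 * p * u ^ 2 → s = 0 ∧ t = 0 ∧ u = 0 := by
  intro n
  induction n with
  | zero => intro s t u hle _; omega
  | succ n ih =>
    intro s t u hle h
    obtain ⟨⟨s, rfl⟩, ⟨t, rfl⟩, ⟨u, rfl⟩⟩ := dvd_of_isotropic p hn s t u h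
    by_cases h0 : s = 0 ∧ t = 0 ∧ u = 0
    · omega
    · have := ih s t u (by omega) (by linarith)
      exact absurd this h0

theorem not_split (p : ℕ) (hn : ¬ IsSquare (p : ZMod 41)) : ¬ quatSplit 2501 (p : ℚ) := by
  intro hs
  obtain ⟨s, t, u, hne, h⟩ := exists_isotropic_of_quatSplit _ _ hs
  -- Clear denominators with the product of all three.
  have hi : (2501 * (s.num * t.den * u.den) ^ 2 + p * (t.num * s.den * u.den) ^ 2 : ℤ)
      = 2501 * p * (u.num * s.den * t.den) ^ 2 := by
    rw [← Rat.num_div_den s, ← Rat.num_div_den t, ← Rat.num_div_den u] at h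
    have h1 : (s.den : ℚ) ≠ 0 := by exact_mod_cast s.den_nz
    have h2 : (t.den : ℚ) ≠ 0 := by exact_mod_cast t.den_nz
    have h3 : (u.den : ℚ) ≠ 0 := by exact_mod_cast u.den_nz
    field_simp at h
    have : (2501 * (s.num * t.den * u.den) ^ 2 + p * (t.num * s.den * u.den) ^ 2 : ℚ)
      = 2501 * p * (u.num * s.den * t.den) ^ 2 := by linarith
    exact_mod_cast this
  have := descent p hn _ _ _ _ le_rfl hi
  simp at this
  tauto

/-- Thue's lemma: pigeonhole on `(m, n) ↦ m - c n` over `{0, …, ⌊√p⌋}²`, which has more than `p`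
elements. The bounds are strict because a prime is not a square. -/
theorem thue (p : ℕ) (hp : p.Prime) (c : ZMod p) : ∃ X Y : ℤ, (X ≠ 0 ∨ Y ≠ 0) ∧
    X ^ 2 < p ∧ Y ^ 2 < p ∧ (X : ZMod p) = c * Y := by
  have : NeZero p := ⟨hp.ne_zero⟩
  set N := Nat.sqrt p with hN
  have hlt : N * N < p := by
    refine lt_of_le_of_ne (Nat.sqrt_le p) fun h => ?_
    have : IsSquare p := ⟨N, h.symm⟩
    exact hp.prime.irreducible.not_isSquare this
  have hgt : p < (N + 1) * (N + 1) := Nat.lt_succ_sqrt p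
  let S := Finset.range (N + 1) ×ˢ Finset.range (N + 1)
  have hcard : (Finset.univ : Finset (ZMod p)).card < S.card := by
    simp [S, ZMod.card]; exact hgt
  obtain ⟨⟨m, n⟩, h1, ⟨m', n'⟩, h2, hne, heq⟩ :=
    Finset.exists_ne_map_eq_of_card_lt_of_maps_to hcard
      (f := fun q : ℕ × ℕ => (q.1 : ZMod p) - c * q.2) (fun _ _ => Finset.mem_univ _)
  simp only [S, Finset.mem_product, Finset.mem_range] at h1 h2
  have hsq : ∀ k l : ℕ, k < N + 1 → l < N + 1 → ((k : ℤ) - l) ^ 2 < p := by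
    intro k l hk hl
    have : ((k : ℤ) - l) ^ 2 ≤ (N : ℤ) ^ 2 := sq_le_sq' (by omega) (by omega)
    have h' : (N : ℤ) * N < p := by exact_mod_cast hlt
    nlinarith
  refine ⟨m - m', n - n', ?_, hsq _ _ h1.1 h2.1, hsq _ _ h1.2 h2.2, ?_⟩
  · by_contra hc
    push Not at hc
    apply hne
    ext <;> simp <;> omega
  · push_cast
    simp only at heq
    linear_combination heq

/-- A prime that is a nonzero square modulo `5` is a norm from `ℚ(√5)`. -/
theorem exists_norm (p : ℕ) (hp : p.Prime) (h5 : p ≠ 5) (hr5 : IsSquare (p : ZMod 5)) :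
    ∃ x y : ℚ, (p : ℚ) = x ^ 2 - 5 * y ^ 2 := by
  have h50 : (5 : ZMod 5) = 0 := by decide
  -- A ratio of squares modulo `5` is a square, and `-2`, `-3` are not.
  have hkey : ∀ P Z K : ZMod 5, IsSquare P → P ≠ 0 → Z ^ 2 = P * K → K ≠ -2 ∧ K ≠ -3 := by
    decide
  have : Fact p.Prime := ⟨hp⟩
  have : Fact (Nat.Prime 5) := ⟨by norm_num⟩
  have hp0 : (p : ZMod 5) ≠ 0 := by
    rw [Ne, ZMod.natCast_eq_zero_iff]
    exact fun h => h5 ((Nat.prime_dvd_prime_iff_eq (by norm_num) hp).1 h).symm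
  have hp2 : p ≠ 2 := by
    rintro rfl
    revert hr5; decide
  obtain ⟨c, hc⟩ : IsSquare ((5 : ℕ) : ZMod p) :=
    (ZMod.exists_sq_eq_prime_iff_of_mod_four_eq_one (p := 5) (q := p) (by norm_num) hp2).1 hr5
  obtain ⟨X, Y, hne, hX, hY, hXY⟩ := thue p hp c
  obtain ⟨k, hk⟩ : (p : ℤ) ∣ X ^ 2 - 5 * Y ^ 2 := by
    rw [← ZMod.intCast_zmod_eq_zero_iff_dvd]
    push_cast at hc ⊢
    rw [hXY, hc]; ring
  have hp1 : (0 : ℤ) < p := by exact_mod_cast hp.pos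
  have hk1 : k < 1 := by
    by_contra hh
    nlinarith [sq_nonneg Y]
  have hk2 : -5 < k := by
    by_contra hh
    nlinarith [sq_nonneg X]
  have hmod : (X : ZMod 5) ^ 2 = p * k := by
    have := congrArg (Int.cast : ℤ → ZMod 5) hk
    push_cast at this
    rw [h50] at this
    linear_combination this
  obtain ⟨hk3, hk4⟩ := hkey _ _ _ hr5 hp0 hmod
  have hkc : k = -4 ∨ k = -1 ∨ k = 0 := by
    have : k ≠ -2 := by rintro rfl; exact hk3 (by push_cast; rfl)
    have : k ≠ -3 := by rintro rfl; exact hk4 (by push_cast; rfl)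
    omega
  have hkq : (X : ℚ) ^ 2 - 5 * Y ^ 2 = p * k := by exact_mod_cast hk
  rcases hkc with rfl | rfl | rfl
  -- Multiply `X + Y√5` by `(1 + √5)/2`, of norm `-1`, and for `k = -4` divide by `2`.
  · refine ⟨(X + 5 * Y) / 4, (X + Y) / 4, ?_⟩
    push_cast at hkq; linear_combination (1 / 4) * hkq
  · refine ⟨(X + 5 * Y) / 2, (X + Y) / 2, ?_⟩
    push_cast at hkq; linear_combination hkq
  · exfalso
    have hY0 : Y = 0 := by
      by_contra hY0
      have hs : IsSquare (5 : ℚ) := by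
        have : (Y : ℚ) ≠ 0 := by exact_mod_cast hY0
        refine ⟨X / Y, ?_⟩
        field_simp
        push_cast at hkq; linarith
      have h5s : IsSquare (5 : ℕ) := by
        rw [← Rat.isSquare_natCast_iff]; exact_mod_cast hs
      exact (by norm_num : Nat.Prime 5).prime.irreducible.not_isSquare h5s
    subst hY0
    have : X = 0 := by simpa using hk
    simp [this] at hne

/-- for every prime `p ∉ {5,41,61}` that is a quadratic residue mod 5 and
mod 61 but a quadratic non-residue mod 41, one has `(5,p) = 0` and `(2501,p) ≠ 0` in
`Br(ℚ)`, where `2501 = 41·61`. -/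
theorem stmt17 (p : ℕ) (hp : p.Prime) (h5 : p ≠ 5) (h41 : p ≠ 41) (h61 : p ≠ 61)
    (hr5 : IsSquare (p : ZMod 5)) (hr61 : IsSquare (p : ZMod 61))
    (hn41 : ¬ IsSquare (p : ZMod 41)) :
    quatSplit 5 (p : ℚ) ∧ ¬ quatSplit 2501 (p : ℚ) := by
  obtain ⟨x, y, hxy⟩ := exists_norm p hp h5 hr5
  exact ⟨quatSplit_of_norm 5 p x y (by norm_num) (by exact_mod_cast hp.ne_zero) hxy,
    not_split p hn41⟩
end
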